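/- arXiv:1110.1963 — 2 statements merged into one kernel-verified Lean document; each statement's English description precedes it below -/
import Mathlib

section
/- Let b_1,…,b_s be the square-free monomials of degree d+1 lying in I \ J. Suppose r > s and for each i ∈ {1,…,r} there exists at most one j ∈ {1,…,s} with f_i | b_j. Then depth_S (I/J) = d. -/
open MvPolynomial

/-- The square-free monomial `∏ i ∈ T, X i` associated to a set `T` of variables. -/
noncomputable def sqMon (K : Type) [Field K] {n : ℕ} (T : Finset (Fin n)) :
    MvPolynomial (Fin n) K :=
  ∏ i ∈ T, X i

/-- `GenBySqMonOfDeg K P I` means: `I` is generated by square-free monomials whose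
degrees satisfy the predicate `P`. -/
def GenBySqMonOfDeg (K : Type) [Field K] {n : ℕ} (P : ℕ → Prop)
    (I : Ideal (MvPolynomial (Fin n) K)) : Prop :=
  ∃ G : Set (Finset (Fin n)), (∀ T ∈ G, P T.card) ∧ I = Ideal.span (sqMon K '' G)

/-- `rho K d I` : the number of square-free monomials of degree `d` belonging to `I`. -/
noncomputable def rho (K : Type) [Field K] {n : ℕ} (d : ℕ)
    (I : Ideal (MvPolynomial (Fin n) K)) : ℕ :=
  Set.ncard {T : Finset (Fin n) | T.card = d ∧ sqMon K T ∈ I}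

/-- The maximal graded ideal `(x_1, …, x_n)` of `K[x_1, …, x_n]`. -/
noncomputable def maxGraded (K : Type) [Field K] (n : ℕ) :
    Ideal (MvPolynomial (Fin n) K) :=
  Ideal.span (Set.range (X : Fin n → MvPolynomial (Fin n) K))

/-- The depth of the module `M` with respect to the ideal `I` : the supremum of the
lengths of `M`-regular sequences consisting of elements of `I`. -/
noncomputable def moduleDepth {R : Type} [CommRing R] (I : Ideal R)
    (M : Type) [AddCommGroup M] [Module R M] : ℕ∞ :=
  sSup {k : ℕ∞ | ∃ rs : List R, k = (rs.length : ℕ∞) ∧ (∀ r ∈ rs, r ∈ I) ∧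
    RingTheory.Sequence.IsRegular M rs}

/-- The `R`-module `I/J` (more precisely `I/(I ∩ J)`, which is `I/J` when `J ≤ I`). -/
noncomputable abbrev idealQuot {R : Type} [CommRing R] (I J : Ideal R) : Type :=
  ↥I ⧸ (Submodule.comap I.subtype (J : Submodule R R))

/-!
The depth of a finite module over a Noetherian ring is the least degree in which its Koszul
cohomology is nonzero, so it suffices to show that `H^p(x_1, …, x_n; I/J)` vanishes for `p < d` and
not for `p = d`.

The Koszul complex of `I/J` splits into strands according to the multidegree. Contraction against
`e_a`, composed with a division by `x_a` that preserves square-free monomial ideals, shows that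
only those strands matter in which the coefficient of `⋀ a ∈ F, e_a` involves no variable outside
`F`. If `#F < d` such a coefficient vanishes, since the generators of `I` have degree at least `d`.

In degree `d`, consider the cochains with coefficient `γ F * ∏ a ∈ F, x_a` at `F`, where
`∏ a ∈ F, x_a` is one of the square-free monomials of degree `d` in `I`. The cocycle condition in
`I/J` is a system of linear equations in `γ`, one for each square-free monomial of degree `d + 1`
in `I \ J`. There are fewer equations than unknowns, hence a nonzero solution, and it is not a
coboundary because coboundaries and `J` lie in the `(d + 1)`-st power of the maximal ideal.
-/

section Koszul

open Finset
open scoped Pointwise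

variable {ι R M : Type*} [LinearOrder ι] [CommRing R] [AddCommGroup M] [Module R M]

/-- The sign `(-1) ^ #{b ∈ F | b < a}` with which the index `a` enters the set `F`. -/
def koszulSign (a : ι) (F : Finset ι) : ℤ :=
  (-1) ^ #{b ∈ F | b < a}

theorem koszulSign_mul_self (a : ι) (F : Finset ι) : koszulSign a F * koszulSign a F = 1 := by
  rw [koszulSign, ← mul_pow, neg_one_mul, neg_neg, one_pow]

theorem koszulSign_erase_of_le {a b : ι} (h : b ≤ a) (F : Finset ι) :
    koszulSign b (F.erase a) = koszulSign b F := by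
  rw [koszulSign, filter_erase, erase_eq_of_notMem (by simp [h.not_gt]), koszulSign]

theorem koszulSign_erase_of_lt {a b : ι} {F : Finset ι} (ha : a ∈ F) (h : a < b) :
    koszulSign b (F.erase a) = -koszulSign b F := by
  have hab : a ∈ F.filter (· < b) := mem_filter.2 ⟨ha, h⟩
  rw [koszulSign, koszulSign, filter_erase, ← card_erase_add_one hab, pow_succ, mul_neg_one,
    neg_neg]

theorem koszulSign_insert_self (a : ι) (F : Finset ι) :
    koszulSign a (insert a F) = koszulSign a F := by
  rw [← koszulSign_erase_of_le le_rfl, erase_insert_eq_erase, koszulSign_erase_of_le le_rfl]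

theorem koszulSign_mul_koszulSign_erase {a b : ι} {F : Finset ι} (ha : a ∈ F) (hb : b ∈ F)
    (hab : a ≠ b) :
    koszulSign a F * koszulSign b (F.erase a) = -(koszulSign b F * koszulSign a (F.erase b)) := by
  rcases hab.lt_or_gt with h | h
  · rw [koszulSign_erase_of_lt ha h, koszulSign_erase_of_le h.le]
    ring
  · rw [koszulSign_erase_of_lt hb h, koszulSign_erase_of_le h.le]
    ring

theorem koszulSign_mul_koszulSign_insert {a b : ι} {F : Finset ι} (ha : a ∉ F) (hb : b ∈ F) :
    koszulSign a F * koszulSign b (insert a F) = -(koszulSign b F * koszulSign a (F.erase b)) := by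
  have hab : a ≠ b := (ne_of_mem_of_not_mem hb ha).symm
  have hsign := koszulSign_mul_koszulSign_erase (mem_insert_self a F) (mem_insert_of_mem hb) hab
  rw [koszulSign_insert_self, erase_insert ha, erase_insert_of_ne hab, koszulSign_insert_self]
    at hsign
  linear_combination koszulSign a F * koszulSign a (F.erase b) * hsign -
    koszulSign b F * koszulSign a (F.erase b) * koszulSign_mul_self a F -
    koszulSign a F * koszulSign b (insert a F) * koszulSign_mul_self a (F.erase b)

/-- The differential of the Koszul cochain complex of the family `x` with coefficients in `M`.
A cochain assigns to the basis vector `⋀ a ∈ F, e_a` its coefficient in `M`, all degrees `#F`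
taken together. -/
def koszulDiff (x : ι → R) : (Finset ι → M) →ₗ[R] (Finset ι → M) :=
  LinearMap.pi fun F ↦ ∑ a ∈ F, koszulSign a F • x a • LinearMap.proj (F.erase a)

theorem koszulDiff_apply (x : ι → R) (c : Finset ι → M) (F : Finset ι) :
    koszulDiff x c F = ∑ a ∈ F, koszulSign a F • x a • c (F.erase a) := by
  simp [koszulDiff]

theorem koszulDiff_congr (x : ι → R) {c c' : Finset ι → M} {F : Finset ι}
    (h : ∀ G, #G < #F → c G = c' G) : koszulDiff x c F = koszulDiff x c' F := by
  simp only [koszulDiff_apply]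
  exact sum_congr rfl fun a ha ↦ by rw [h _ (card_erase_lt_of_mem ha)]

theorem koszulDiff_comp {N : Type*} [AddCommGroup N] [Module R N] (x : ι → R) (φ : M →ₗ[R] N)
    (c : Finset ι → M) (F : Finset ι) : koszulDiff x (φ ∘ c) F = φ (koszulDiff x c F) := by
  simp [koszulDiff_apply]

theorem koszulDiff_mem {x : ι → R} {N : Submodule R M} {c : Finset ι → M} {F : Finset ι}
    (h : ∀ a ∈ F, x a • c (F.erase a) ∈ N) : koszulDiff x c F ∈ N := by
  rw [koszulDiff_apply]
  exact sum_mem fun a ha ↦ zsmul_mem (h a ha) _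

theorem koszulDiff_koszulDiff (x : ι → R) (c : Finset ι → M) :
    koszulDiff x (koszulDiff x c) = 0 := by
  funext F
  simp only [koszulDiff_apply, smul_sum, Pi.zero_apply]
  rw [sum_sigma']
  refine sum_involution (fun p _ ↦ ⟨p.2, p.1⟩) ?_ ?_ ?_ fun _ _ ↦ rfl
  · rintro ⟨a, b⟩ hp
    obtain ⟨ha, hba, hb⟩ := by simpa only [mem_sigma, mem_erase] using hp
    simp only [smul_comm (x _) (koszulSign _ _), smul_smul (koszulSign _ _),
      koszulSign_mul_koszulSign_erase ha hb hba.symm, smul_comm (x b), erase_right_comm (a := b)]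
    simp
  · rintro ⟨a, b⟩ hp - h
    simp_all
  · rintro ⟨a, b⟩ hp
    simp_all [eq_comm]

/-- Contraction of a cochain against `e_a`, followed by an additive map `D` on coefficients. -/
def koszulContract (a : ι) (D : M →+ M) (c : Finset ι → M) : Finset ι → M :=
  fun F ↦ if a ∈ F then 0 else koszulSign a F • D (c (insert a F))

theorem koszulDiff_koszulContract_add (x : ι → R) {a : ι} {D : M →+ M}
    (hD : ∀ b ≠ a, ∀ m, D (x b • m) = x b • D m) (c : Finset ι → M) (F : Finset ι) :
    koszulDiff x (koszulContract a D c) F + koszulContract a D (koszulDiff x c) F =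
      if a ∈ F then x a • D (c F) else D (x a • c F) := by
  by_cases ha : a ∈ F
  · simp only [koszulContract, if_pos ha, add_zero, koszulDiff_apply]
    rw [sum_eq_single_of_mem a ha fun b _ hba ↦ by simp [hba.symm, ha], if_neg (by simp),
      insert_erase ha, koszulSign_erase_of_le le_rfl, smul_comm (x a), smul_smul,
      koszulSign_mul_self, one_smul]
  · have cancel : ∀ b ∈ F, koszulSign b F • x b • koszulContract a D c (F.erase b) +
        koszulSign a F • D (koszulSign b (insert a F) • x b • c ((insert a F).erase b)) = 0 := by
      intro b hb
      have hba : b ≠ a := ne_of_mem_of_not_mem hb ha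
      rw [koszulContract, if_neg (by simp [ha]), erase_insert_of_ne hba.symm, map_zsmul, hD b hba,
        smul_comm (x b), smul_smul, smul_smul,
        koszulSign_mul_koszulSign_insert ha hb, neg_smul, add_neg_cancel]
    have hcontract : koszulContract a D (koszulDiff x c) F =
        koszulSign a F • D (koszulDiff x c (insert a F)) := if_neg ha
    rw [if_neg ha, hcontract, koszulDiff_apply x c, sum_insert ha, map_add, smul_add, map_sum,
      smul_sum, koszulDiff_apply, add_left_comm, ← sum_add_distrib, sum_eq_zero cancel, add_zero,
      map_zsmul, smul_smul, koszulSign_insert_self, koszulSign_mul_self, one_smul,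
      erase_insert ha]

theorem exists_koszulDiff_eq_smul {x : ι → R} {y : R} (hy : y ∈ Ideal.span (Set.range x)) {k : ℕ}
    {c : Finset ι → M} (hc : ∀ F, #F ≤ k + 1 → koszulDiff x c F = 0) :
    ∃ u : Finset ι → M, ∀ F, #F ≤ k → koszulDiff x u F = y • c F := by
  induction hy using Submodule.span_induction with
  | mem y hy =>
    obtain ⟨a, rfl⟩ := hy
    refine ⟨koszulContract a (.id M) c, fun F hF ↦ ?_⟩
    have hzero : koszulContract a (.id M) (koszulDiff x c) F = 0 := by
      simp [koszulContract, hc (insert a F) ((card_insert_le a F).trans (by lia))]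
    simpa [hzero] using koszulDiff_koszulContract_add x (a := a) (D := .id M) (by simp) c F
  | zero => exact ⟨0, by simp⟩
  | add y z _ _ ihy ihz =>
    obtain ⟨u, hu⟩ := ihy
    obtain ⟨v, hv⟩ := ihz
    exact ⟨u + v, fun F hF ↦ by simp [hu F hF, hv F hF, add_smul]⟩
  | smul r y _ ih =>
    obtain ⟨u, hu⟩ := ih
    exact ⟨r • u, fun F hF ↦ by simp [hu F hF, mul_smul]⟩

/-- The Koszul cohomology `H^p(x; M)` vanishes for all `p < k`. Cochains are not required to be
homogeneous: the components of degree `≥ k` play no role on either side. -/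
def KoszulAcyclicBelow (x : ι → R) (M : Type*) [AddCommGroup M] [Module R M] (k : ℕ) : Prop :=
  ∀ c : Finset ι → M, (∀ F, #F ≤ k → koszulDiff x c F = 0) →
    ∃ w : Finset ι → M, ∀ F, #F < k → koszulDiff x w F = c F

theorem koszulAcyclicBelow_zero (x : ι → R) : KoszulAcyclicBelow x M 0 :=
  fun _ _ ↦ ⟨0, by simp⟩

theorem KoszulAcyclicBelow.mono {x : ι → R} {k l : ℕ} (hkl : k ≤ l)
    (h : KoszulAcyclicBelow x M l) : KoszulAcyclicBelow x M k := by
  intro c hc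
  let c' : Finset ι → M := fun F ↦ if #F < k then c F else 0
  obtain ⟨w, hw⟩ := h c' fun F _ ↦ by
    rcases le_or_gt #F k with hF | hF
    · rw [← hc F hF]
      exact koszulDiff_congr x fun G hG ↦ if_pos (hG.trans_le hF)
    · rw [← Submodule.mem_bot R]
      refine koszulDiff_mem fun a ha ↦ ?_
      have hcard := card_erase_add_one ha
      simp [c', show ¬ #(F.erase a) < k by lia]
  exact ⟨w, fun F hF ↦ (hw F (hF.trans_le hkl)).trans (if_pos hF)⟩

theorem koszulAcyclicBelow_quotient_iff {x : ι → R} {N : Submodule R M} {k : ℕ} :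
    KoszulAcyclicBelow x (M ⧸ N) k ↔
      ∀ c : Finset ι → M, (∀ F, #F ≤ k → koszulDiff x c F ∈ N) →
        ∃ w : Finset ι → M, ∀ F, #F < k → koszulDiff x w F - c F ∈ N := by
  simp only [KoszulAcyclicBelow, N.mkQ_surjective.comp_left.forall,
    N.mkQ_surjective.comp_left.exists, koszulDiff_comp, Function.comp_apply, Submodule.mkQ_apply,
    Submodule.Quotient.mk_eq_zero, Submodule.Quotient.eq]

theorem KoszulAcyclicBelow.of_quotSMulTop {x : ι → R} {y : R}
    (hy : y ∈ Ideal.span (Set.range x)) (hreg : IsSMulRegular M y) {k : ℕ}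
    (h : KoszulAcyclicBelow x (QuotSMulTop y M) k) : KoszulAcyclicBelow x M (k + 1) := by
  intro c hc
  obtain ⟨u, hu⟩ := exists_koszulDiff_eq_smul hy hc
  obtain ⟨v, hv⟩ := koszulAcyclicBelow_quotient_iff.1 h u fun F hF ↦ by
    rw [hu F hF]
    exact Submodule.smul_mem_pointwise_smul _ _ _ Submodule.mem_top
  have hw : ∀ F, ∃ m, #F < k → y • m = u F - koszulDiff x v F := fun F ↦ by
    by_cases hF : #F < k
    · obtain ⟨m, -, hm⟩ := hv F hF
      exact ⟨-m, fun _ ↦ by rw [smul_neg, ← neg_sub (koszulDiff x v F), ← hm]; rfl⟩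
    · exact ⟨0, fun h ↦ absurd h hF⟩
  choose w hw using hw
  refine ⟨w, fun F hF ↦ hreg ?_⟩
  calc y • koszulDiff x w F = koszulDiff x (y • w) F := by rw [map_smul, Pi.smul_apply]
    _ = koszulDiff x (u - koszulDiff x v) F := koszulDiff_congr x fun G hG ↦ hw G (by lia)
    _ = koszulDiff x u F := by rw [map_sub, koszulDiff_koszulDiff, sub_zero]
    _ = y • c F := hu F (by lia)

theorem KoszulAcyclicBelow.quotSMulTop {x : ι → R} {y : R} (hreg : IsSMulRegular M y) {k : ℕ}
    (h : KoszulAcyclicBelow x M (k + 1)) : KoszulAcyclicBelow x (QuotSMulTop y M) k := by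
  refine koszulAcyclicBelow_quotient_iff.2 fun u hu ↦ ?_
  have hw : ∀ F, ∃ m, #F ≤ k → y • m = koszulDiff x u F := fun F ↦ by
    by_cases hF : #F ≤ k
    · obtain ⟨m, -, hm⟩ := hu F hF
      exact ⟨m, fun _ ↦ hm⟩
    · exact ⟨0, fun h ↦ absurd h hF⟩
  choose w hw using hw
  obtain ⟨v, hv⟩ := h w fun F hF ↦ hreg <|
    calc y • koszulDiff x w F = koszulDiff x (y • w) F := by rw [map_smul, Pi.smul_apply]
      _ = koszulDiff x (koszulDiff x u) F := koszulDiff_congr x fun G hG ↦ hw G (by lia)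
      _ = y • 0 := by rw [koszulDiff_koszulDiff, Pi.zero_apply, smul_zero]
  obtain ⟨t, ht⟩ := h.mono (Nat.le_succ k) (u - y • v) fun F hF ↦ by
    simp [hv F (by lia), hw F hF]
  refine ⟨t, fun F hF ↦ ?_⟩
  rw [ht F hF, Pi.sub_apply, sub_sub_cancel_left, Pi.smul_apply, neg_mem_iff]
  exact Submodule.smul_mem_pointwise_smul _ _ _ Submodule.mem_top

theorem KoszulAcyclicBelow.of_isWeaklyRegular {x : ι → R} {rs : List R}
    (hrs : ∀ y ∈ rs, y ∈ Ideal.span (Set.range x))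
    (hreg : RingTheory.Sequence.IsWeaklyRegular M rs) : KoszulAcyclicBelow x M rs.length := by
  induction rs generalizing M with
  | nil => exact koszulAcyclicBelow_zero x
  | cons y rs ih =>
    rw [List.forall_mem_cons] at hrs
    rw [RingTheory.Sequence.isWeaklyRegular_cons_iff] at hreg
    exact .of_quotSMulTop hrs.1 hreg.1 (ih hrs.2 hreg.2)

theorem KoszulAcyclicBelow.exists_isSMulRegular [IsNoetherianRing R] [Module.Finite R M]
    {x : ι → R} (h : KoszulAcyclicBelow x M 1) :
    ∃ y ∈ Ideal.span (Set.range x), IsSMulRegular M y := by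
  suffices Subsingleton ((R ⧸ Ideal.span (Set.range x)) →ₗ[R] M) by
    simpa only [Ideal.annihilator_quotient] using IsSMulRegular.subsingleton_linearMap_iff.1 this
  refine subsingleton_of_forall_eq 0 fun φ ↦ ?_
  have hkill : ∀ a, x a • φ 1 = 0 := fun a ↦ by
    rw [← map_smul, Algebra.smul_def, mul_one, Ideal.Quotient.algebraMap_eq,
      Ideal.Quotient.eq_zero_iff_mem.2 (Ideal.subset_span (Set.mem_range_self a)), map_zero]
  obtain ⟨w, hw⟩ := h (fun _ ↦ φ 1) fun F _ ↦ by simp [koszulDiff_apply, hkill]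
  have hone : φ 1 = 0 := by simpa [koszulDiff_apply] using (hw ∅ (by simp)).symm
  ext
  simpa using hone

theorem KoszulAcyclicBelow.exists_isWeaklyRegular [IsNoetherianRing R] [Module.Finite R M]
    {x : ι → R} {k : ℕ} (h : KoszulAcyclicBelow x M k) :
    ∃ rs : List R, rs.length = k ∧ (∀ y ∈ rs, y ∈ Ideal.span (Set.range x)) ∧
      RingTheory.Sequence.IsWeaklyRegular M rs := by
  induction k generalizing M with
  | zero => exact ⟨[], rfl, by simp, .nil R M⟩
  | succ k ih =>
    obtain ⟨y, hy, hreg⟩ := (h.mono (by lia)).exists_isSMulRegular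
    obtain ⟨rs, rfl, hmem, hrs⟩ := ih (h.quotSMulTop hreg)
    exact ⟨y :: rs, rfl, List.forall_mem_cons.2 ⟨hy, hmem⟩, .cons hreg hrs⟩

theorem koszulAcyclicBelow_of_top_le_smul_top [Module.Finite R M] {x : ι → R}
    (h : (⊤ : Submodule R M) ≤ Ideal.span (Set.range x) • ⊤) (k : ℕ) :
    KoszulAcyclicBelow x M k := by
  obtain ⟨r, hr, hrM⟩ := Submodule.exists_sub_one_mem_and_smul_eq_zero_of_fg_of_le_smul _ _
    Module.Finite.fg_top h
  refine .mono (Nat.le_succ k) fun c hc ↦ ?_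
  obtain ⟨u, hu⟩ := exists_koszulDiff_eq_smul (Ideal.neg_mem_iff _ |>.2 hr) hc
  refine ⟨u, fun F hF ↦ ?_⟩
  rw [hu F (by lia), neg_sub, sub_smul, one_smul, hrM _ Submodule.mem_top, sub_zero]

end Koszul

section Depth

open Finset

theorem moduleDepth_span_range_eq {ι : Type*} [LinearOrder ι] {R M : Type} [CommRing R]
    [IsNoetherianRing R] [AddCommGroup M] [Module R M] [Module.Finite R M] {x : ι → R} {k : ℕ}
    (hk : KoszulAcyclicBelow x M k) (hk' : ¬ KoszulAcyclicBelow x M (k + 1)) :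
    moduleDepth (Ideal.span (Set.range x)) M = k := by
  refine le_antisymm (sSup_le ?_) (le_sSup ?_)
  · rintro _ ⟨rs, rfl, hmem, hreg⟩
    by_contra! hlt
    exact hk' ((KoszulAcyclicBelow.of_isWeaklyRegular hmem hreg.toIsWeaklyRegular).mono
      (by exact_mod_cast hlt))
  · obtain ⟨rs, rfl, hmem, hreg⟩ := hk.exists_isWeaklyRegular
    refine ⟨rs, rfl, hmem, hreg, fun htop ↦ hk' (koszulAcyclicBelow_of_top_le_smul_top ?_ _)⟩
    exact htop.le.trans (Submodule.smul_mono_left (Ideal.span_le.2 hmem))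

theorem koszulAcyclicBelow_idealQuot_iff {ι : Type*} [LinearOrder ι] {R : Type} [CommRing R]
    {x : ι → R} {I J : Ideal R} {k : ℕ} :
    KoszulAcyclicBelow x (idealQuot I J) k ↔
      ∀ c : Finset ι → R, (∀ F, c F ∈ I) → (∀ F, #F ≤ k → koszulDiff x c F ∈ J) →
        ∃ w : Finset ι → R, (∀ F, w F ∈ I) ∧ ∀ F, #F < k → koszulDiff x w F - c F ∈ J := by
  have hcoe (c : Finset ι → I) (F : Finset ι) :
      ((koszulDiff x c F : I) : R) = koszulDiff x (fun G ↦ (c G : R)) F :=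
    (koszulDiff_comp x I.subtype c F).symm
  rw [koszulAcyclicBelow_quotient_iff]
  simp only [Submodule.mem_comap, Submodule.subtype_apply, AddSubgroupClass.coe_sub, hcoe]
  constructor
  · intro h c hcI hcJ
    obtain ⟨w, hw⟩ := h (fun F ↦ ⟨c F, hcI F⟩) hcJ
    exact ⟨fun F ↦ w F, fun F ↦ (w F).2, hw⟩
  · intro h c hcJ
    obtain ⟨w, hwI, hw⟩ := h (fun F ↦ c F) (fun F ↦ (c F).2) hcJ
    exact ⟨fun F ↦ ⟨w F, hwI F⟩, hw⟩

end Depth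

section DivRepeated

variable {σ R : Type*} [CommSemiring R]

/-- The additive map sending a monomial `x ^ μ` to `x ^ μ / x_a` if `x_a ^ 2` divides it, and to
`0` otherwise. Unlike plain division by `x_a`, it maps every square-free monomial ideal to
itself. -/
noncomputable def divRepeated (a : σ) : MvPolynomial σ R →+ MvPolynomial σ R where
  toFun p := X a * p.divMonomial (Finsupp.single a 2)
  map_zero' := by rw [zero_divMonomial, mul_zero]
  map_add' p q := by rw [add_divMonomial, mul_add]

theorem coeff_divRepeated (a : σ) (p : MvPolynomial σ R) (μ : σ →₀ ℕ) :
    coeff μ (divRepeated a p) = if μ a = 0 then 0 else coeff (μ + Finsupp.single a 1) p := by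
  classical
  rw [divRepeated, AddMonoidHom.coe_mk, ZeroHom.coe_mk, coeff_X_mul', coeff_divMonomial]
  by_cases h : μ a = 0
  · simp [h]
  · have hle : Finsupp.single a 1 ≤ μ :=
      Finsupp.single_le_iff.2 (Nat.one_le_iff_ne_zero.2 h)
    rw [if_pos (Finsupp.mem_support_iff.2 h), if_neg h, ← add_tsub_assoc_of_le hle]
    congr 1
    ext b
    rcases eq_or_ne b a with rfl | hba
    · simp only [Finsupp.add_apply, Finsupp.tsub_apply, Finsupp.single_eq_same]
      lia
    · simp [hba]

theorem divRepeated_X_mul {a b : σ} (hba : b ≠ a) (p : MvPolynomial σ R) :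
    divRepeated a (X b * p) = X b * divRepeated a p := by
  classical
  ext μ
  simp only [coeff_divRepeated, coeff_X_mul', Finsupp.mem_support_iff]
  by_cases hb : μ b = 0
  · simp [hb, hba.symm]
  · have hle : Finsupp.single b 1 ≤ μ :=
      Finsupp.single_le_iff.2 (Nat.one_le_iff_ne_zero.2 hb)
    simp [hb, hba, hba.symm, tsub_add_eq_add_tsub hle]

theorem coeff_divRepeated_X_mul_self (a : σ) (p : MvPolynomial σ R) (μ : σ →₀ ℕ) :
    coeff μ (divRepeated a (X a * p)) = if μ a = 0 then 0 else coeff μ p := by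
  rw [coeff_divRepeated, add_comm, coeff_X_mul]

theorem coeff_X_mul_divRepeated (a : σ) (p : MvPolynomial σ R) (μ : σ →₀ ℕ) :
    coeff μ (X a * divRepeated a p) = if μ a ≤ 1 then 0 else coeff μ p := by
  classical
  rw [coeff_X_mul', coeff_divRepeated]
  by_cases h : μ a = 0
  · simp [h]
  · have hle : Finsupp.single a 1 ≤ μ :=
      Finsupp.single_le_iff.2 (Nat.one_le_iff_ne_zero.2 h)
    simp [h, tsub_add_cancel_of_le hle, Nat.sub_eq_zero_iff_le]

end DivRepeated

section Reduction

open Finset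

variable {σ R : Type*} [LinearOrder σ] [CommRing R]

/-- The cochain homotopic to `c` under the homotopy given by contraction against `e_a` followed by
`divRepeated a`. It is the part of `c` in which the exponent of `x_a` in the coefficient of
`⋀ b ∈ F, e_b` is `0` if `a ∉ F` and at most `1` if `a ∈ F`. -/
noncomputable def koszulReduce (a : σ) (c : Finset σ → MvPolynomial σ R) :
    Finset σ → MvPolynomial σ R :=
  c - (koszulDiff (X (R := R)) (koszulContract a (divRepeated a) c) +
    koszulContract a (divRepeated a) (koszulDiff (X (R := R)) c))

theorem koszulDiff_koszulReduce (a : σ) (c : Finset σ → MvPolynomial σ R) :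
    koszulDiff (X (R := R)) (koszulReduce a c) = koszulReduce a (koszulDiff (X (R := R)) c) := by
  have hzero : koszulContract a (divRepeated (R := R) a) 0 = 0 := by
    funext F
    simp [koszulContract]
  simp only [koszulReduce, map_sub, map_add, koszulDiff_koszulDiff, hzero, zero_add, add_zero]

theorem coeff_koszulReduce (a : σ) (c : Finset σ → MvPolynomial σ R) (F : Finset σ) (μ : σ →₀ ℕ) :
    coeff μ (koszulReduce a c F) =
      if μ a ≤ (if a ∈ F then 1 else 0) then coeff μ (c F) else 0 := by
  rw [koszulReduce, Pi.sub_apply, Pi.add_apply,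
    koszulDiff_koszulContract_add X fun b hba m ↦ divRepeated_X_mul hba m]
  by_cases ha : a ∈ F
  · simp only [if_pos ha, smul_eq_mul, coeff_sub, coeff_X_mul_divRepeated]
    split_ifs <;> simp
  · simp only [if_neg ha, smul_eq_mul, coeff_sub, coeff_divRepeated_X_mul_self, nonpos_iff_eq_zero]
    split_ifs <;> simp

end Reduction

section SquareFree

open Finset

variable {n : ℕ} {K : Type} [Field K] {d : ℕ}

theorem sqMon_eq_monomial (T : Finset (Fin n)) :
    sqMon K T = monomial (∑ a ∈ T, Finsupp.single a 1) 1 :=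
  (monomial_sum_one T _).symm

theorem X_mul_sqMon_erase {T : Finset (Fin n)} {a : Fin n} (ha : a ∈ T) :
    X a * sqMon K (T.erase a) = sqMon K T :=
  mul_prod_erase T _ ha

theorem sum_single_one_le_iff {σ : Type*} {T : Finset σ} {μ : σ →₀ ℕ} :
    ∑ a ∈ T, Finsupp.single a 1 ≤ μ ↔ T ⊆ μ.support := by
  classical
  simp only [Finsupp.le_def, Finsupp.finsetSum_apply, Finsupp.single_apply, sum_ite_eq',
    subset_iff, Finsupp.mem_support_iff]
  exact forall_congr' fun a ↦ by split_ifs <;> simp [*, Nat.one_le_iff_ne_zero]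

theorem mem_span_sqMon_iff {G : Set (Finset (Fin n))} {p : MvPolynomial (Fin n) K} :
    p ∈ Ideal.span (sqMon K '' G) ↔ ∀ μ ∈ p.support, ∃ T ∈ G, T ⊆ μ.support := by
  have himage : sqMon K '' G =
      (fun μ ↦ monomial μ (1 : K)) '' ((fun T ↦ ∑ a ∈ T, Finsupp.single a 1) '' G) := by
    rw [Set.image_image]
    exact Set.image_congr fun T _ ↦ sqMon_eq_monomial T
  simp only [himage, mem_ideal_span_monomial_image, Set.exists_mem_image, sum_single_one_le_iff]

theorem divRepeated_mem_span_sqMon {G : Set (Finset (Fin n))} (a : Fin n)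
    {p : MvPolynomial (Fin n) K} (hp : p ∈ Ideal.span (sqMon K '' G)) :
    divRepeated a p ∈ Ideal.span (sqMon K '' G) := by
  rw [mem_span_sqMon_iff] at hp ⊢
  intro μ hμ
  rw [mem_support_iff, coeff_divRepeated, ite_ne_left_iff] at hμ
  obtain ⟨T, hT, hsub⟩ := hp _ (mem_support_iff.2 hμ.2.symm)
  refine ⟨T, hT, hsub.trans fun b hb ↦ ?_⟩
  rw [Finsupp.mem_support_iff] at hb ⊢
  rcases eq_or_ne b a with rfl | hba
  · exact hμ.1
  · simpa [hba] using hb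

theorem koszulContract_divRepeated_mem {G : Set (Finset (Fin n))} {a : Fin n}
    {c : Finset (Fin n) → MvPolynomial (Fin n) K} {F : Finset (Fin n)}
    (h : c (insert a F) ∈ Ideal.span (sqMon K '' G)) :
    koszulContract a (divRepeated a) c F ∈ Ideal.span (sqMon K '' G) := by
  by_cases ha : a ∈ F
  · simp [koszulContract, ha]
  · rw [koszulContract, if_neg ha]
    exact zsmul_mem (divRepeated_mem_span_sqMon a h) _

theorem koszulReduce_mem {G : Set (Finset (Fin n))} {a : Fin n}
    {c : Finset (Fin n) → MvPolynomial (Fin n) K} {F : Finset (Fin n)}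
    (h : c F ∈ Ideal.span (sqMon K '' G)) : koszulReduce a c F ∈ Ideal.span (sqMon K '' G) := by
  rw [mem_span_sqMon_iff] at h ⊢
  intro μ hμ
  rw [mem_support_iff, coeff_koszulReduce, ite_ne_right_iff] at hμ
  exact h μ (mem_support_iff.2 hμ.2)

/-- Here `A` is the set of variables along which `c` may still have to be reduced. -/
theorem exists_koszulDiff_sub_mem {G H : Set (Finset (Fin n))} (hG : ∀ T ∈ G, d ≤ #T)
    (A : Finset (Fin n)) (c : Finset (Fin n) → MvPolynomial (Fin n) K)
    (hcG : ∀ F, c F ∈ Ideal.span (sqMon K '' G))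
    (hcH : ∀ F, #F ≤ d → koszulDiff (X (R := K)) c F ∈ Ideal.span (sqMon K '' H))
    (hcA : ∀ F, ∀ μ ∈ (c F).support, μ.support ⊆ F ∪ A) :
    ∃ w : Finset (Fin n) → MvPolynomial (Fin n) K, (∀ F, w F ∈ Ideal.span (sqMon K '' G)) ∧
      ∀ F, #F < d → koszulDiff (X (R := K)) w F - c F ∈ Ideal.span (sqMon K '' H) := by
  induction A using Finset.induction_on generalizing c with
  | empty =>
    have hc : ∀ F, #F < d → c F = 0 := fun F hF ↦ by
      rw [← support_eq_empty, eq_empty_iff_forall_notMem]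
      intro μ hμ
      obtain ⟨T, hT, hTμ⟩ := mem_span_sqMon_iff.1 (hcG F) μ hμ
      have hTF : T ⊆ F := hTμ.trans (by simpa using hcA F μ hμ)
      exact hF.not_ge ((hG T hT).trans (card_le_card hTF))
    exact ⟨0, by simp, fun F hF ↦ by simp [hc F hF]⟩
  | insert a A _ ih =>
    obtain ⟨w, hwG, hw⟩ := ih (koszulReduce a c) (fun F ↦ koszulReduce_mem (hcG F))
      (fun F hF ↦ by rw [koszulDiff_koszulReduce]; exact koszulReduce_mem (hcH F hF))
      fun F μ hμ b hb ↦ by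
        rw [mem_support_iff, coeff_koszulReduce, ite_ne_right_iff] at hμ
        have hmem := hcA F μ (mem_support_iff.2 hμ.2) hb
        rw [Finsupp.mem_support_iff] at hb
        grind
    refine ⟨w + koszulContract a (divRepeated a) c,
      fun F ↦ add_mem (hwG F) (koszulContract_divRepeated_mem (hcG _)), fun F hF ↦ ?_⟩
    have hcontract : koszulContract a (divRepeated a)
        (koszulDiff (X (R := K)) c) F ∈ Ideal.span (sqMon K '' H) :=
      koszulContract_divRepeated_mem (hcH _ ((card_insert_le a F).trans hF))
    convert sub_mem (hw F hF) hcontract using 1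
    simp only [koszulReduce, map_add, Pi.add_apply, Pi.sub_apply]
    ring

theorem koszulAcyclicBelow_idealQuot_span {G : Set (Finset (Fin n))} (hG : ∀ T ∈ G, d ≤ #T)
    (H : Set (Finset (Fin n))) :
    KoszulAcyclicBelow (X : Fin n → MvPolynomial (Fin n) K)
      (idealQuot (Ideal.span (sqMon K '' G)) (Ideal.span (sqMon K '' H))) d :=
  koszulAcyclicBelow_idealQuot_iff.2 fun c hcG hcH ↦
    exists_koszulDiff_sub_mem hG univ c hcG hcH fun _ _ _ ↦
      (subset_univ _).trans subset_union_right

end SquareFree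

section Nonvanishing

open Finset

theorem exists_ne_zero_of_card_lt_card {K α β : Type*} [Field K] (T : (α → K) →ₗ[K] (β → K))
    {A : Finset α} {B : Finset β} (h : #B < #A) :
    ∃ γ : α → K, γ ≠ 0 ∧ (∀ a ∉ A, γ a = 0) ∧ ∀ b ∈ B, T γ b = 0 := by
  let E : (A → K) →ₗ[K] (α → K) := Function.ExtendByZero.linearMap K Subtype.val
  have hker : (LinearMap.funLeft K K (Subtype.val : B → β) ∘ₗ T ∘ₗ E).ker ≠ ⊥ :=
    LinearMap.ker_ne_bot_of_finrank_lt (by simpa using h)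
  obtain ⟨v, hv, hv0⟩ := Submodule.exists_mem_ne_zero_of_ne_bot hker
  refine ⟨E v, fun hE ↦ hv0 ?_, fun a ha ↦ ?_, fun b hb ↦ congr_fun hv ⟨b, hb⟩⟩
  · funext a
    simpa [E, Subtype.val_injective.extend_apply] using congr_fun hE a
  · exact Function.extend_apply' _ _ _ fun ⟨a', ha'⟩ ↦ ha (ha' ▸ a'.2)

variable {n : ℕ} {K : Type} [Field K] {d : ℕ}

theorem koszulDiff_C_mul_sqMon (γ : Finset (Fin n) → K) (F : Finset (Fin n)) :
    koszulDiff (X (R := K)) (fun T ↦ C (γ T) * sqMon K T) F =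
      C (koszulDiff (fun _ ↦ (1 : K)) γ F) * sqMon K F := by
  simp only [koszulDiff_apply, map_sum, sum_mul]
  refine sum_congr rfl fun a ha ↦ ?_
  rw [← X_mul_sqMon_erase ha, one_smul, map_zsmul, smul_eq_mul, mul_left_comm, smul_mul_assoc]

theorem C_mul_sqMon_mem_maxGraded_pow_iff {r : K} {T : Finset (Fin n)} {k : ℕ} (hr : r ≠ 0) :
    C r * sqMon K T ∈ maxGraded K n ^ k ↔ k ≤ #T := by
  rw [sqMon_eq_monomial, C_mul_monomial, mul_one]
  refine (monomial_mem_pow_idealOfVars_iff k _ hr).trans ?_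
  simp

theorem GenBySqMonOfDeg.le_maxGraded_pow {I : Ideal (MvPolynomial (Fin n) K)}
    (hI : GenBySqMonOfDeg K (d ≤ ·) I) : I ≤ maxGraded K n ^ d := by
  obtain ⟨G, hG, rfl⟩ := hI
  rw [Ideal.span_le, Set.image_subset_iff]
  intro T hT
  simpa using (C_mul_sqMon_mem_maxGraded_pow_iff (one_ne_zero (α := K))).2 (hG T hT)

theorem exists_koszulCocycle_of_ncard_lt_rho {I J : Ideal (MvPolynomial (Fin n) K)}
    (h : {T : Finset (Fin n) | #T = d + 1 ∧ sqMon K T ∈ I ∧ sqMon K T ∉ J}.ncard < rho K d I) :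
    ∃ γ : Finset (Fin n) → K, γ ≠ 0 ∧ (∀ F, γ F ≠ 0 → #F = d ∧ sqMon K F ∈ I) ∧
      ∀ F, koszulDiff (X (R := K)) (fun T ↦ C (γ T) * sqMon K T) F ∈ J := by
  classical
  rw [rho, Set.ncard_eq_toFinset_card', Set.ncard_eq_toFinset_card'] at h
  obtain ⟨γ, hγ, hγA, hγB⟩ :=
    exists_ne_zero_of_card_lt_card (koszulDiff fun _ : Fin n ↦ (1 : K)) h
  have hγI : ∀ F, γ F ≠ 0 → #F = d ∧ sqMon K F ∈ I := fun F hF ↦ by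
    by_contra hF'
    exact hF (hγA F (by simpa using hF'))
  refine ⟨γ, hγ, hγI, fun F ↦ ?_⟩
  rw [koszulDiff_C_mul_sqMon]
  by_cases hFJ : sqMon K F ∈ J
  · exact Ideal.mul_mem_left _ _ hFJ
  suffices koszulDiff (fun _ ↦ (1 : K)) γ F = 0 by simp [this]
  by_cases hF : #F = d + 1 ∧ sqMon K F ∈ I
  · exact hγB F (by simpa using ⟨hF.1, hF.2, hFJ⟩)
  · rw [koszulDiff_apply]
    refine sum_eq_zero fun a ha ↦ ?_
    have hzero : γ (F.erase a) = 0 := by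
      by_contra hγa
      obtain ⟨hcard, hI⟩ := hγI _ hγa
      exact hF ⟨by rw [← hcard, card_erase_add_one ha],
        X_mul_sqMon_erase (K := K) ha ▸ Ideal.mul_mem_left _ _ hI⟩
    rw [one_smul, hzero, smul_zero]

theorem not_koszulAcyclicBelow_idealQuot {I J : Ideal (MvPolynomial (Fin n) K)}
    (hI : I ≤ maxGraded K n ^ d) (hJ : J ≤ maxGraded K n ^ (d + 1))
    (h : {T : Finset (Fin n) | #T = d + 1 ∧ sqMon K T ∈ I ∧ sqMon K T ∉ J}.ncard < rho K d I) :
    ¬ KoszulAcyclicBelow (X : Fin n → MvPolynomial (Fin n) K) (idealQuot I J) (d + 1) := by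
  obtain ⟨γ, hγ, hγI, hγJ⟩ := exists_koszulCocycle_of_ncard_lt_rho h
  rw [koszulAcyclicBelow_idealQuot_iff]
  intro hacyclic
  obtain ⟨w, hwI, hw⟩ := hacyclic (fun T ↦ C (γ T) * sqMon K T)
    (fun F ↦ by
      by_cases hF : γ F = 0
      · simp [hF]
      · exact Ideal.mul_mem_left _ _ (hγI F hF).2)
    fun F _ ↦ hγJ F
  obtain ⟨F, hF⟩ := Function.ne_iff.1 hγ
  have hcard : #F = d := (hγI F hF).1
  have hboundary : koszulDiff (X (R := K)) w F ∈ maxGraded K n ^ (d + 1) :=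
    koszulDiff_mem fun a _ ↦ by
      rw [pow_succ', smul_eq_mul]
      exact Ideal.mul_mem_mul (Ideal.subset_span (Set.mem_range_self a)) (hI (hwI _))
  have hcocycle : C (γ F) * sqMon K F ∈ maxGraded K n ^ (d + 1) := by
    simpa using sub_mem hboundary (hJ (hw F (by lia)))
  have := (C_mul_sqMon_mem_maxGraded_pow_iff hF).1 hcocycle
  lia

theorem ncard_le_of_subset_range {α : Type*} {S : Set α} {s : ℕ} {b : Fin s → α}
    (h : S ⊆ Set.range b) : S.ncard ≤ s := by
  simpa using (Set.ncard_le_ncard h).trans (Finite.card_range_le b)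

theorem le_rho_of_injective {I : Ideal (MvPolynomial (Fin n) K)} {r : ℕ}
    {f : Fin r → Finset (Fin n)} (hf : Function.Injective f) (hfd : ∀ i, #(f i) = d)
    (hfI : ∀ i, sqMon K (f i) ∈ I) : r ≤ rho K d I := by
  have hrange : Set.range f ⊆ {T | #T = d ∧ sqMon K T ∈ I} :=
    Set.range_subset_iff.2 fun i ↦ ⟨hfd i, hfI i⟩
  calc r = (Set.range f).ncard := by rw [Set.ncard_range_of_injective hf, Nat.card_fin]
    _ ≤ rho K d I := Set.ncard_le_ncard hrange

theorem stmt_6_general {n : ℕ} {K : Type} [Field K] {d : ℕ}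
    {I J : Ideal (MvPolynomial (Fin n) K)} (hI : GenBySqMonOfDeg K (d ≤ ·) I)
    (hJ : GenBySqMonOfDeg K (d + 1 ≤ ·) J)
    (h : {T : Finset (Fin n) | #T = d + 1 ∧ sqMon K T ∈ I ∧ sqMon K T ∉ J}.ncard < rho K d I) :
    moduleDepth (maxGraded K n) (idealQuot I J) = (d : ℕ∞) := by
  refine moduleDepth_span_range_eq ?_
    (not_koszulAcyclicBelow_idealQuot hI.le_maxGraded_pow hJ.le_maxGraded_pow h)
  obtain ⟨G, hG, rfl⟩ := hI
  obtain ⟨H, -, rfl⟩ := hJ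
  exact koszulAcyclicBelow_idealQuot_span hG H

end Nonvanishing

/-- Proposition 1.10. -/
theorem stmt_6 (n : ℕ) (K : Type) [Field K] (d : ℕ) (hd : 0 < d)
    (I J : Ideal (MvPolynomial (Fin n) K)) (hJ0 : J ≠ ⊥) (hJI : J < I)
    (r : ℕ) (hr : 0 < r) (f : Fin r → Finset (Fin n)) (hfinj : Function.Injective f)
    (hfd : ∀ i, (f i).card = d)
    (hIgen : I = Ideal.span (Set.range fun i => sqMon K (f i)))
    (hJgen : GenBySqMonOfDeg K (fun k => k = d + 1) J)
    (s : ℕ) (b : Fin s → Finset (Fin n)) (hbinj : Function.Injective b)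
    (hbd : ∀ j, (b j).card = d + 1)
    (hbI : ∀ j, sqMon K (b j) ∈ I) (hbJ : ∀ j, sqMon K (b j) ∉ J)
    (hball : ∀ T : Finset (Fin n), T.card = d + 1 → sqMon K T ∈ I →
      sqMon K T ∉ J → ∃ j, T = b j)
    (hrs : s < r)
    (hone : ∀ i : Fin r, ∀ j k : Fin s, f i ⊆ b j → f i ⊆ b k → j = k) :
    moduleDepth (maxGraded K n) (idealQuot I J) = (d : ℕ∞) := by
  have hI : GenBySqMonOfDeg K (d ≤ ·) I :=
    ⟨Set.range f, by simp [hfd], by rw [hIgen, ← Set.range_comp]; rfl⟩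
  have hJ : GenBySqMonOfDeg K (d + 1 ≤ ·) J :=
    hJgen.imp fun _ hH ↦ hH.imp_left fun hdeg T hT ↦ (hdeg T hT).ge
  have hball' : {T | T.card = d + 1 ∧ sqMon K T ∈ I ∧ sqMon K T ∉ J} ⊆ Set.range b :=
    fun T hT ↦ (hball T hT.1 hT.2.1 hT.2.2).imp fun _ ↦ Eq.symm
  have hfI : ∀ i, sqMon K (f i) ∈ I := fun i ↦ hIgen ▸ Ideal.subset_span ⟨i, rfl⟩
  exact stmt_6_general hI hJ <|
    (ncard_le_of_subset_range hball').trans_lt (hrs.trans_le (le_rho_of_injective hfinj hfd hfI))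
end

section
/- Suppose d = 1, f_i = x_i for i ∈ {1,…,r}, and every square-free monomial b_j of degree 2 in I \ J lies in the subring S' = K[x_1,…,x_r]. Then depth_S (I/J) = 1 (independently of r and of the number s of such monomials b_j; s may be greater than r). -/
open MvPolynomial

/-!
Let `V` be the set of variables generating `I`. The hypothesis says that `x_k I ⊆ J` for every
variable `x_k ∉ V`, so every element of the maximal graded ideal acts on `M = I/J` as some element
of `I` does. Let `a ∈ I` be regular on `M`, regarded also as an element `ā` of `M`. Every `b ∈ I`
satisfies `b • ā = a • b̄`, so if `b` were regular on `M/aM` then `ā = a • y` for some `y ∈ M`, and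
cancelling `a` in `a • x = a • (x y)` would give `M = I M`, contradicting that `I` is generated in
degree one and `J` in higher degrees. Hence the depth is at most one.

Conversely the sum `ℓ` of all variables is regular on `M`. If `u` is a non-constant monomial of `g`
outside `J`, containing `x_i` and with the largest exponent of `x_i` among the monomials of `g`
outside `J`, then `x_i u` survives in `ℓ g`, and it is outside `J` because `J` is square-free.
-/

section IdealQuot

open scoped Pointwise

variable {R : Type} [CommRing R] {I J A : Ideal R} {a b : R}

lemma idealQuot.mk_mem_smul_top_iff {x : I} :
    (Submodule.Quotient.mk x : idealQuot I J) ∈ (a • ⊤ : Submodule R (idealQuot I J)) ↔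
      ∃ y ∈ I, (x : R) - a * y ∈ J := by
  have mk_eq_smul_mk (y : I) :
      a • (Submodule.Quotient.mk y : idealQuot I J) = Submodule.Quotient.mk x ↔
        (x : R) - a * y ∈ J := by
    rw [← Submodule.Quotient.mk_smul, eq_comm, Submodule.Quotient.eq]
    rfl
  simp only [Submodule.mem_smul_pointwise_iff_exists, Submodule.mem_top, true_and,
    (Submodule.Quotient.mk_surjective _).exists, mk_eq_smul_mk, Subtype.exists, exists_prop]

lemma idealQuot.isSMulRegular_iff :
    IsSMulRegular (idealQuot I J) a ↔ ∀ x ∈ I, a * x ∈ J → x ∈ J := by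
  simp only [isSMulRegular_quotient_iff_mem_of_smul_mem, Subtype.forall, Submodule.mem_comap,
    Submodule.subtype_apply, Submodule.coe_smul, smul_eq_mul]

lemma exists_mem_forall_sub_mul_mem (hAI : A * I ≤ J) (ha : a ∈ I ⊔ A) :
    ∃ a' ∈ I, ∀ x ∈ I, (a - a') * x ∈ J := by
  obtain ⟨a', ha', c, hc, rfl⟩ := Submodule.mem_sup.1 ha
  refine ⟨a', ha', fun x hx => ?_⟩
  rw [add_sub_cancel_left]
  exact hAI (Ideal.mul_mem_mul hc hx)

lemma idealQuot.smul_top_ne_top (hAI : A * I ≤ J) (hI : ¬ I ≤ J ⊔ I * I) (ha : a ∈ I ⊔ A) :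
    (a • ⊤ : Submodule R (idealQuot I J)) ≠ ⊤ := by
  intro htop
  refine hI fun x hx => ?_
  obtain ⟨y, hy, hxy⟩ : ∃ y ∈ I, x - a * y ∈ J :=
    idealQuot.mk_mem_smul_top_iff (x := ⟨x, hx⟩).1 (htop.ge Submodule.mem_top)
  obtain ⟨a', ha', haa'⟩ := exists_mem_forall_sub_mul_mem hAI ha
  have hx_eq : x = (x - a * y + (a - a') * y) + a' * y := by ring
  rw [hx_eq]
  exact Submodule.add_mem_sup (J.add_mem hxy (haa' y hy)) (Ideal.mul_mem_mul ha' hy)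

lemma idealQuot.not_isSMulRegular_quotSMulTop (hAI : A * I ≤ J) (hI : ¬ I ≤ J ⊔ I * I)
    (ha : a ∈ I ⊔ A) (hb : b ∈ I ⊔ A) (hreg : IsSMulRegular (idealQuot I J) a) :
    ¬ IsSMulRegular (QuotSMulTop a (idealQuot I J)) b := by
  intro hregb
  obtain ⟨a', ha', haa'⟩ := exists_mem_forall_sub_mul_mem hAI ha
  obtain ⟨b', hb', hbb'⟩ := exists_mem_forall_sub_mul_mem hAI hb
  have smul_mem : b • (Submodule.Quotient.mk ⟨a', ha'⟩ : idealQuot I J) ∈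
      (a • ⊤ : Submodule R (idealQuot I J)) := by
    rw [← Submodule.Quotient.mk_smul, idealQuot.mk_mem_smul_top_iff]
    have h_eq : b * a' - a * b' = (b - b') * a' - (a - a') * b' := by ring
    exact ⟨b', hb', h_eq ▸ J.sub_mem (hbb' a' ha') (haa' b' hb')⟩
  obtain ⟨y, hy, hay⟩ : ∃ y ∈ I, a' - a * y ∈ J := idealQuot.mk_mem_smul_top_iff.1
    ((isSMulRegular_quotient_iff_mem_of_smul_mem _ _).1 hregb _ smul_mem)
  refine hI fun x hx => ?_
  have mul_sub_mem : a * (x - x * y) ∈ J := by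
    have h_eq : a * (x - x * y) = (a - a') * x + x * (a' - a * y) := by ring
    exact h_eq ▸ J.add_mem (haa' x hx) (J.mul_mem_left x hay)
  have sub_mem : x - x * y ∈ J :=
    idealQuot.isSMulRegular_iff.1 hreg _ (I.sub_mem hx (I.mul_mem_right y hx)) mul_sub_mem
  simpa only [sub_add_cancel] using Submodule.add_mem_sup sub_mem (Ideal.mul_mem_mul hx hy)

theorem moduleDepth_idealQuot_eq_one (hAI : A * I ≤ J) (hI : ¬ I ≤ J ⊔ I * I)
    (ha : a ∈ I ⊔ A) (hreg : IsSMulRegular (idealQuot I J) a) :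
    moduleDepth (I ⊔ A) (idealQuot I J) = 1 := by
  refine le_antisymm (sSup_le ?_) (le_sSup ⟨[a], by simp, by simpa using ha, ?_⟩)
  · rintro _ ⟨rs, rfl, hrs, hrs_reg⟩
    rcases rs with _ | ⟨c, _ | ⟨d, rs⟩⟩
    · simp
    · simp
    · have hweak := hrs_reg.toIsWeaklyRegular
      simp only [RingTheory.Sequence.isWeaklyRegular_cons_iff] at hweak
      obtain ⟨hc_reg, hd_reg, -⟩ := hweak
      exact absurd hd_reg <| idealQuot.not_isSMulRegular_quotSMulTop hAI hI
        (hrs c (by simp)) (hrs d (by simp)) hc_reg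
  · rw [RingTheory.Sequence.isRegular_iff, RingTheory.Sequence.isWeaklyRegular_singleton_iff,
      Ideal.ofList_singleton, Submodule.ideal_span_singleton_smul]
    exact ⟨hreg, (idealQuot.smul_top_ne_top hAI hI ha).symm⟩

end IdealQuot

section SquarefreeMonomialIdeal

variable {σ R : Type*} [CommSemiring R] {G : Set (Finset σ)}

variable (R) in
/-- The square-free monomial ideal of `R[x_i : i ∈ σ]` generated by the monomials `∏ i ∈ T, x_i`
for `T ∈ G`. -/
noncomputable def squarefreeMonomialIdeal (G : Set (Finset σ)) : Ideal (MvPolynomial σ R) :=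
  Ideal.span ((fun T : Finset σ => ∏ i ∈ T, X i) '' G)

lemma indicator_one_le_iff_subset_support {T : Finset σ} {u : σ →₀ ℕ} :
    Finsupp.indicator T (fun _ _ => 1) ≤ u ↔ T ⊆ u.support := by
  classical
  simp only [Finsupp.le_def, Finsupp.indicator_apply, Finset.subset_iff, Finsupp.mem_support_iff]
  refine forall_congr' fun i => ?_
  split_ifs with hi <;> simp [hi, Nat.one_le_iff_ne_zero]

lemma mem_squarefreeMonomialIdeal_iff {p : MvPolynomial σ R} :
    p ∈ squarefreeMonomialIdeal R G ↔ ∀ u ∈ p.support, ∃ T ∈ G, T ⊆ u.support := by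
  have prod_X_eq (T : Finset σ) : ∏ i ∈ T, (X i : MvPolynomial σ R) =
      monomial (Finsupp.indicator T fun _ _ => 1) 1 := by
    simpa only [pow_one] using prod_X_pow (R := R) (fun _ => 1) T
  have span_eq : squarefreeMonomialIdeal R G = Ideal.span ((fun u => monomial u (1 : R)) ''
      ((fun T => Finsupp.indicator T fun _ _ => 1) '' G)) := by
    simp only [squarefreeMonomialIdeal, prod_X_eq, Set.image_image]
  simp only [span_eq, mem_ideal_span_monomial_image, Set.exists_mem_image,
    indicator_one_le_iff_subset_support]

lemma squarefreeMonomialIdeal_le_pow_idealOfVars {d : ℕ} (hG : ∀ T ∈ G, d ≤ T.card) :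
    squarefreeMonomialIdeal R G ≤ idealOfVars σ R ^ d := by
  rw [squarefreeMonomialIdeal, Ideal.span_le]
  rintro _ ⟨T, hT, rfl⟩
  refine Ideal.pow_le_pow_right (hG T hT) ?_
  rw [← Finset.prod_const]
  exact Ideal.prod_mem_prod fun i _ => Ideal.subset_span (Set.mem_range_self i)

lemma coeff_sum_X_mul [Fintype σ] (m : σ →₀ ℕ) (g : MvPolynomial σ R) :
    coeff m ((∑ j, X j) * g) = ∑ j ∈ m.support, coeff (m - Finsupp.single j 1) g := by
  classical
  simp only [Finset.sum_mul, coeff_sum, coeff_X_mul', Finset.sum_ite_mem, Finset.univ_inter]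

lemma coeff_add_single_sum_X_mul [Fintype σ] {u : σ →₀ ℕ} {g : MvPolynomial σ R} (i : σ)
    (h : ∀ v ∈ g.support, v.support ⊆ (u + Finsupp.single i 1).support → v i ≤ u i) :
    coeff (u + Finsupp.single i 1) ((∑ j, X j) * g) = coeff u g := by
  rw [coeff_sum_X_mul, Finset.sum_eq_single i, add_tsub_cancel_right]
  · intro j _ hji
    by_contra hv
    have hle := h _ (mem_support_iff.2 hv) (Finsupp.support_mono tsub_le_self)
    simp [hji] at hle
  · intro hi
    simp at hi

theorem mem_squarefreeMonomialIdeal_of_sum_X_mul_mem [Fintype σ] {g : MvPolynomial σ R}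
    (hg : g ∈ idealOfVars σ R) (h : (∑ j, X j) * g ∈ squarefreeMonomialIdeal R G) :
    g ∈ squarefreeMonomialIdeal R G := by
  classical
  rw [mem_squarefreeMonomialIdeal_iff] at h ⊢
  by_contra! hbad
  obtain ⟨u₀, hu₀g, hu₀G⟩ := hbad
  have hu₀ : u₀ ≠ 0 := by
    rintro rfl
    simpa using (mem_pow_idealOfVars_iff 1 g).1 (by rwa [pow_one]) 0 hu₀g
  obtain ⟨i, hi⟩ := Finsupp.support_nonempty_iff.2 hu₀
  obtain ⟨u, hu, hmax⟩ := (g.support.filter fun u => ∀ T ∈ G, ¬ T ⊆ u.support).exists_max_image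
    (fun u => u i) ⟨u₀, Finset.mem_filter.2 ⟨hu₀g, hu₀G⟩⟩
  simp only [Finset.mem_filter, and_imp] at hu hmax
  obtain ⟨hug, huG⟩ := hu
  have hui : u i ≠ 0 := ((Nat.pos_of_ne_zero (Finsupp.mem_support_iff.1 hi)).trans_le
    (hmax u₀ hu₀g hu₀G)).ne'
  have support_eq : (u + Finsupp.single i 1).support = u.support := by
    ext j
    by_cases hj : j = i <;> simp [hj, hui, Ne.symm]
  have coeff_eq : coeff (u + Finsupp.single i 1) ((∑ j, X j) * g) = coeff u g :=
    coeff_add_single_sum_X_mul i fun v hvg hvu =>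
      hmax v hvg fun T hT hTv => huG T hT (hTv.trans (hvu.trans support_eq.subset))
  obtain ⟨T, hT, hTu⟩ := h (u + Finsupp.single i 1)
    (by rwa [mem_support_iff, coeff_eq, ← mem_support_iff])
  exact huG T hT (hTu.trans support_eq.subset)

end SquarefreeMonomialIdeal

section SpanX

variable {σ R : Type*} [CommSemiring R]

lemma span_X_image_sup_compl (V : Set σ) :
    Ideal.span (X '' V) ⊔ Ideal.span (X '' Vᶜ) = idealOfVars σ R := by
  rw [← Ideal.span_union, ← Set.image_union, Set.union_compl_self, Set.image_univ]

lemma span_X_image_le_idealOfVars (V : Set σ) : Ideal.span (X '' V) ≤ idealOfVars σ R :=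
  Ideal.span_mono (Set.image_subset_range X V)

lemma not_span_X_image_le_pow_idealOfVars_two [Nontrivial R] {V : Set σ} (hV : V.Nonempty) :
    ¬ Ideal.span (X '' V) ≤ idealOfVars σ R ^ 2 := by
  obtain ⟨i, hi⟩ := hV
  intro hle
  have hX : X i ∈ idealOfVars σ R ^ 2 := hle (Ideal.subset_span (Set.mem_image_of_mem X hi))
  rw [X, monomial_mem_pow_idealOfVars_iff 2 _ one_ne_zero, Finsupp.degree_single] at hX
  omega

lemma span_X_image_mul_span_X_image_le {V W : Set σ} {J : Ideal (MvPolynomial σ R)}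
    (h : ∀ k ∈ W, ∀ i ∈ V, X k * X i ∈ J) : Ideal.span (X '' W) * Ideal.span (X '' V) ≤ J := by
  rw [Ideal.span_mul_span', Ideal.span_le]
  rintro _ ⟨_, ⟨k, hk, rfl⟩, _, ⟨i, hi, rfl⟩, rfl⟩
  exact h k hk i hi

end SpanX

theorem stmt_9_general {σ R : Type} [Finite σ] [CommRing R] [Nontrivial R] {V : Set σ}
    {G : Set (Finset σ)} (hV : V.Nonempty) (hG : ∀ T ∈ G, 2 ≤ T.card)
    (hVG : ∀ k ∉ V, ∀ i ∈ V, X k * X i ∈ squarefreeMonomialIdeal R G) :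
    moduleDepth (idealOfVars σ R)
      (idealQuot (Ideal.span (X '' V)) (squarefreeMonomialIdeal R G)) = 1 := by
  cases nonempty_fintype σ
  have hIm : Ideal.span (X '' V) ≤ idealOfVars σ R := span_X_image_le_idealOfVars V
  have sup_le_sq : squarefreeMonomialIdeal R G ⊔ Ideal.span (X '' V) * Ideal.span (X '' V) ≤
      idealOfVars σ R ^ 2 :=
    sup_le (squarefreeMonomialIdeal_le_pow_idealOfVars hG)
      (pow_two (idealOfVars σ R) ▸ Ideal.mul_mono hIm hIm)
  have sum_X_mem : ∑ j, X j ∈ idealOfVars σ R :=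
    Ideal.sum_mem _ fun j _ => Ideal.subset_span (Set.mem_range_self j)
  rw [← span_X_image_sup_compl V] at sum_X_mem ⊢
  exact moduleDepth_idealQuot_eq_one (span_X_image_mul_span_X_image_le hVG)
    (fun hle => not_span_X_image_le_pow_idealOfVars_two hV (hle.trans sup_le_sq)) sum_X_mem
    (idealQuot.isSMulRegular_iff.2 fun x hx =>
      mem_squarefreeMonomialIdeal_of_sum_X_mul_mem (hIm hx))

section SqMon

variable {K : Type} [Field K] {n : ℕ}

lemma span_range_sqMon_singleton_castLE {r : ℕ} (hrn : r ≤ n) :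
    Ideal.span (Set.range fun i : Fin r => sqMon K {Fin.castLE hrn i}) =
      Ideal.span (X '' {k : Fin n | (k : ℕ) < r}) := by
  simp only [sqMon, Finset.prod_singleton]
  rw [← Fin.range_castLE hrn, ← Set.range_comp]
  rfl

lemma X_mul_X_mem_of_forall_sqMon {V : Set (Fin n)} {J : Ideal (MvPolynomial (Fin n) K)}
    (hb : ∀ T : Finset (Fin n), T.card = 2 → sqMon K T ∈ Ideal.span (X '' V) → sqMon K T ∉ J →
      ∀ k ∈ T, k ∈ V) :
    ∀ k ∉ V, ∀ i ∈ V, X k * X i ∈ J := by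
  intro k hk i hi
  have hki : k ≠ i := fun h => hk (h ▸ hi)
  have sqMon_pair : sqMon K {k, i} = X k * X i := Finset.prod_pair hki
  by_contra hJ
  rw [← sqMon_pair] at hJ
  refine hk (hb {k, i} (Finset.card_pair hki) ?_ hJ k (Finset.mem_insert_self k {i}))
  exact sqMon_pair ▸ Ideal.mul_mem_left _ _ (Ideal.subset_span (Set.mem_image_of_mem X hi))

end SqMon

/-- Lemma 1.13. -/
theorem stmt_9 (n : ℕ) (K : Type) [Field K]
    (I J : Ideal (MvPolynomial (Fin n) K)) (hJ0 : J ≠ ⊥) (hJI : J < I)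
    (r : ℕ) (hr : 0 < r) (hrn : r ≤ n) (f : Fin r → Finset (Fin n))
    (hf : ∀ i : Fin r, f i = {Fin.castLE hrn i})
    (hIgen : I = Ideal.span (Set.range fun i => sqMon K (f i)))
    (hJgen : GenBySqMonOfDeg K (fun k => k = 2) J)
    (hb : ∀ T : Finset (Fin n), T.card = 2 → sqMon K T ∈ I → sqMon K T ∉ J →
      ∀ k ∈ T, (k : ℕ) < r) :
    moduleDepth (maxGraded K n) (idealQuot I J) = (1 : ℕ∞) := by
  obtain ⟨G, hG, rfl⟩ := hJgen
  simp only [hf, span_range_sqMon_singleton_castLE] at hIgen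
  subst hIgen
  exact stmt_9_general ⟨⟨0, hr.trans_le hrn⟩, hr⟩ (fun T hT => (hG T hT).ge)
    (X_mul_X_mem_of_forall_sqMon hb)
end
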